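/- For any quaternions u₁, u, u₂ over ℝ, the squared norm of the triple commutator equals the Gram determinant of the three arguments: ‖[u₁, u, u₂]‖² = det G, where G is the 3×3 Gram matrix with entries G = !![⟪u₁,u₁⟫, ⟪u₁,u⟫, ⟪u₁,u₂⟫; ⟪u₁,u⟫, ⟪u,u⟫, ⟪u,u₂⟫; ⟪u₁,u₂⟫, ⟪u,u₂⟫, ⟪u₂,u₂⟫]. -/

import Mathlib

open Quaternion RealInnerProductSpace Matrix

/-!
Write `a = u₁ * star u * u₂` and `b = u₂ * star u * u₁`, and `N` for `normSq`. Both have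
`N`-value `N u₁ * N u * N u₂`, so `N (a - b)` is determined by the inner product of `a` and `b`,
which is `re (u₁ * star u * u₂ * star u₁ * (u * star u₂))`. Polarizing `x * star x = N x` allows
exchanging `u * star u₂` for `2⟪u, u₂⟫ - u₂ * star u`. The scalar part leaves a conjugation by `u₁`;
the rest is, by cyclicity of `re`, the inner product of `u₂ * star u₁ * u₂` and `u * star u₁ * u`.
These are the values of `x * star u₁ * x = 2⟪x, u₁⟫ x - N x u₁` at `x = u₂` and `x = u`.
-/

section CommRing

variable {R : Type*} [CommRing R]

theorem quaternion_re_mul_comm (a b : ℍ[R]) : (a * b).re = (b * a).re := by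
  simp only [re_mul]
  ring

/-- The symmetric bilinear form on quaternions over a commutative ring whose quadratic form is
`Quaternion.normSq`. Over `ℝ` it is definitionally the inner product. -/
def quaternionInner : LinearMap.BilinForm R ℍ[R] :=
  LinearMap.mk₂ R (fun a b ↦ (a * star b).re)
    (fun a b c ↦ by simp only [add_mul, re_add])
    (fun r a b ↦ by simp only [smul_mul_assoc, re_smul])
    (fun a b c ↦ by simp only [star_add, mul_add, re_add])
    (fun r a b ↦ by simp only [Quaternion.star_smul, mul_smul_comm, re_smul])

theorem quaternionInner_apply (a b : ℍ[R]) : quaternionInner a b = (a * star b).re := rfl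

theorem quaternionInner_self (a : ℍ[R]) : quaternionInner a a = normSq a := rfl

theorem quaternionInner_comm (a b : ℍ[R]) : quaternionInner a b = quaternionInner b a := by
  rw [quaternionInner_apply, quaternionInner_apply, ← re_star (a * star b), star_mul, star_star]

theorem quaternion_normSq_sub (a b : ℍ[R]) :
    normSq (a - b) = normSq a + normSq b - 2 * quaternionInner a b := by
  simp only [← quaternionInner_self, map_sub, LinearMap.sub_apply, quaternionInner_comm b a]
  ring

theorem quaternion_mul_star_eq_coe_sub (a b : ℍ[R]) :
    a * star b = ↑(2 * quaternionInner a b) - b * star a :=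
  eq_sub_of_add_eq <| by
    simpa only [star_mul, star_star, quaternionInner_apply] using self_add_star' (a * star b)

theorem quaternion_mul_star_mul_self (a b : ℍ[R]) :
    a * star b * a = (2 * quaternionInner a b) • a - normSq a • b := by
  rw [quaternion_mul_star_eq_coe_sub, sub_mul, coe_mul_eq_smul, mul_assoc, star_mul_self,
    mul_coe_eq_smul]

theorem quaternion_re_mul_mul_star (a b : ℍ[R]) : (a * b * star a).re = normSq a * b.re := by
  rw [quaternion_re_mul_comm, ← mul_assoc, star_mul_self, coe_mul_eq_smul, re_smul, smul_eq_mul]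

theorem quaternionInner_reflections (u₁ u u₂ : ℍ[R]) :
    quaternionInner (u₂ * star u₁ * u₂) (u * star u₁ * u) =
      4 * quaternionInner u₁ u * quaternionInner u₁ u₂ * quaternionInner u u₂
        - 2 * normSq u * quaternionInner u₁ u₂ ^ 2 - 2 * normSq u₂ * quaternionInner u₁ u ^ 2
        + normSq u₁ * normSq u * normSq u₂ := by
  simp only [quaternion_mul_star_mul_self, map_sub, map_smul, LinearMap.sub_apply,
    LinearMap.smul_apply, smul_eq_mul, quaternionInner_self, quaternionInner_comm u₂,
    quaternionInner_comm u u₁]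
  ring

theorem quaternionInner_triple_reverse (u₁ u u₂ : ℍ[R]) :
    quaternionInner (u₁ * star u * u₂) (u₂ * star u * u₁) =
      2 * normSq u₁ * quaternionInner u u₂ ^ 2
        - quaternionInner (u₂ * star u₁ * u₂) (u * star u₁ * u) := by
  have conj_term : (u₁ * (star u * u₂) * star u₁).re = normSq u₁ * quaternionInner u u₂ := by
    rw [quaternion_re_mul_mul_star, quaternion_re_mul_comm, quaternionInner_comm,
      quaternionInner_apply]
  have reflection_term : (u₁ * star u * u₂ * star u₁ * (u₂ * star u)).re =
      quaternionInner (u₂ * star u₁ * u₂) (u * star u₁ * u) := by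
    simpa only [quaternionInner_apply, star_mul, star_star, mul_assoc] using
      quaternion_re_mul_comm (u₁ * star u) (u₂ * star u₁ * u₂ * star u)
  calc quaternionInner (u₁ * star u * u₂) (u₂ * star u * u₁)
      = (u₁ * star u * u₂ * star u₁ * (u * star u₂)).re := by
        simp only [quaternionInner_apply, star_mul, star_star, mul_assoc]
    _ = 2 * quaternionInner u u₂ * (u₁ * (star u * u₂) * star u₁).re
          - (u₁ * star u * u₂ * star u₁ * (u₂ * star u)).re := by
        rw [quaternion_mul_star_eq_coe_sub u u₂, mul_sub, mul_coe_eq_smul, re_sub, re_smul,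
          smul_eq_mul, mul_assoc u₁ (star u) u₂]
    _ = 2 * normSq u₁ * quaternionInner u u₂ ^ 2
          - quaternionInner (u₂ * star u₁ * u₂) (u * star u₁ * u) := by
        rw [conj_term, reflection_term]
        ring

theorem quaternion_commutator_norm_sq_general (u₁ u u₂ : ℍ[R]) :
    normSq (u₁ * star u * u₂ - u₂ * star u * u₁) =
      4 * Matrix.det
        !![quaternionInner u₁ u₁, quaternionInner u₁ u, quaternionInner u₁ u₂;
           quaternionInner u₁ u, quaternionInner u u, quaternionInner u u₂;
           quaternionInner u₁ u₂, quaternionInner u u₂, quaternionInner u₂ u₂] := by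
  rw [quaternion_normSq_sub, quaternionInner_triple_reverse, quaternionInner_reflections,
    det_fin_three]
  simp only [map_mul, normSq_star, quaternionInner_self, of_apply, cons_val]
  ring

end CommRing

theorem quaternion_norm_div_two_sq (a : ℍ) : ‖a / 2‖ ^ 2 = normSq a / 4 := by
  rw [sq, ← normSq_eq_norm_mul_self, normSq_div, ← Nat.cast_ofNat, normSq_natCast]
  norm_num

theorem quaternion_commutator_norm_sq (u₁ u u₂ : ℍ) :
    ‖(u₁ * star u * u₂ - u₂ * star u * u₁) / 2‖ ^ 2 =
      Matrix.det !![⟪u₁, u₁⟫, ⟪u₁, u⟫, ⟪u₁, u₂⟫;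
                    ⟪u₁, u⟫, ⟪u, u⟫, ⟪u, u₂⟫;
                    ⟪u₁, u₂⟫, ⟪u, u₂⟫, ⟪u₂, u₂⟫] := by
  rw [quaternion_norm_div_two_sq, quaternion_commutator_norm_sq_general]
  exact mul_div_cancel_left₀ _ four_ne_zero
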